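/- Let q ≡ 3 (mod 4) and p ≡ 1 (mod 4) be primes. Then 4 divides the class number h(-qp) of Q(√(-qp)) if and only if (-q/p) = 1. -/

import Mathlib

open NumberField Module
open nonZeroDivisors

lemma aux_ternary {r : ℕ} [Fact r.Prime] (A B C : ℤ) (hA : ¬ (r : ℤ) ∣ A) (hB : ¬ (r : ℤ) ∣ B)
    (hC : ¬ (r : ℤ) ∣ C) : ∀ (N : ℕ) (x y z : ℤ), x.natAbs = N → x ≠ 0 →
    A * x ^ 2 = B * y ^ 2 + r * C * z ^ 2 → legendreSym r (A * B) = 1 := by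
  have hr : Prime (r : ℤ) := Nat.prime_iff_prime_int.mp Fact.out
  intro N
  induction N using Nat.strong_induction_on with
  | _ N ih =>
  intro x y z hN hx h
  by_cases hrx : (r : ℤ) ∣ x
  · have hry : (r : ℤ) ∣ y := by
      have : (r : ℤ) ∣ B * y ^ 2 := by
        have e : B * y ^ 2 = A * x ^ 2 - r * (C * z ^ 2) := by linarith
        rw [e]
        exact dvd_sub (Dvd.dvd.mul_left (dvd_pow hrx two_ne_zero) _) (dvd_mul_right _ _)
      rcases hr.dvd_or_dvd this with h | h
      · exact absurd h hB
      · exact hr.dvd_of_dvd_pow h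
    obtain ⟨x', rfl⟩ := hrx
    obtain ⟨y', rfl⟩ := hry
    have hrz : (r : ℤ) ∣ z := by
      have : (r : ℤ) ∣ C * z ^ 2 := by
        refine ⟨A * x' ^ 2 - B * y' ^ 2, ?_⟩
        apply mul_left_cancel₀ hr.ne_zero
        linarith
      rcases hr.dvd_or_dvd this with h | h
      · exact absurd h hC
      · exact hr.dvd_of_dvd_pow h
    obtain ⟨z', rfl⟩ := hrz
    have hx' : x' ≠ 0 := by rintro rfl; simp at hx
    refine ih x'.natAbs ?_ x' y' z' rfl hx' ?_
    · rw [← hN, Int.natAbs_mul]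
      have h1 : 1 < r := (Fact.out : r.Prime).one_lt
      have h2 : 0 < x'.natAbs := Int.natAbs_pos.mpr hx'
      simp only [Int.natAbs_natCast]
      nlinarith
    · apply mul_left_cancel₀ (pow_ne_zero 2 hr.ne_zero)
      linarith
  · have hz : ∀ a : ℤ, ¬ (r : ℤ) ∣ a → (a : ZMod r) ≠ 0 := fun a ha h' =>
      ha ((ZMod.intCast_zmod_eq_zero_iff_dvd a r).mp h')
    have hA' := hz A hA
    have hB' := hz B hB
    have hx' := hz x hrx
    have h' : (A : ZMod r) * x ^ 2 = B * y ^ 2 := by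
      have := congrArg (Int.cast : ℤ → ZMod r) h
      push_cast at this
      simpa using this
    have hy' : (y : ZMod r) ≠ 0 := by
      intro h0
      rw [h0] at h'
      simp [hA', hx'] at h'
    rw [legendreSym.eq_one_iff r (by push_cast; exact mul_ne_zero hA' hB')]
    refine ⟨(A : ZMod r) * x / y, ?_⟩
    push_cast
    field_simp
    linear_combination -h'

lemma aux_rat (d : ℕ) (hd : Squarefree d) (u : ℚ) (k : ℤ) (h : (d : ℚ) * u ^ 2 = k) :
    ∃ b : ℤ, u = b := by
  have hden : u.den = 1 := by
    have h1 : (d : ℤ) * u.num ^ 2 = k * (u.den : ℤ) ^ 2 := by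
      have hu := Rat.num_div_den u
      have h0 : (u.den : ℚ) ≠ 0 := by exact_mod_cast u.den_nz
      rw [← hu] at h
      field_simp at h
      have h' : (d : ℤ) * u.num ^ 2 = (u.den : ℤ) ^ 2 * k := by exact_mod_cast h
      rw [h', mul_comm]
    have h2 : (u.den ^ 2 : ℕ) ∣ d := by
      have hc : IsCoprime ((u.den : ℤ) ^ 2) (u.num ^ 2) := by
        apply IsCoprime.pow
        rw [Int.isCoprime_iff_gcd_eq_one, Int.gcd_comm]
        exact u.reduced
      have : ((u.den : ℤ) ^ 2) ∣ d := hc.dvd_of_dvd_mul_right (h1 ▸ dvd_mul_left _ _)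
      exact_mod_cast this
    rw [pow_two] at h2
    exact Nat.isUnit_iff.mp (hd _ h2)
  exact ⟨u.num, by rw [← Rat.num_div_den u, hden]; simp⟩

lemma aux_group {G : Type*} [CommGroup G] [Finite G] (P : G) (hP : P ≠ 1) (hP2 : P ^ 2 = 1)
    (h2 : ∀ c : G, c ^ 2 = 1 → c = 1 ∨ c = P) :
    (4 ∣ Nat.card G ↔ ∃ c, c ^ 2 = P) ∧
    ((¬ ∃ c, c ^ 2 = P) → ∀ a : G, (∃ c, c ^ 2 = a) ∨ (∃ c, c ^ 2 = a * P)) := by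
  let f : G →* G := powMonoidHom 2
  have hker : Nat.card f.ker = 2 := by
    rw [Nat.card_eq_two_iff]
    refine ⟨1, ⟨P, hP2⟩, ?_, ?_⟩
    · intro h
      exact hP (congrArg Subtype.val h).symm
    · ext ⟨c, hc⟩
      simp only [Set.mem_insert_iff, Set.mem_singleton_iff, Set.mem_univ, iff_true]
      rcases h2 c hc with h | h
      · left; exact Subtype.ext h
      · right; exact Subtype.ext h
  have hidx : f.range.index = 2 := by
    have e1 := f.ker.card_mul_index
    have e2 := f.range.card_mul_index
    rw [Subgroup.index_ker, hker] at e1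
    have : 0 < Nat.card f.range := Nat.card_pos
    nlinarith
  constructor
  · constructor
    · intro h4
      have e1 := f.ker.card_mul_index
      rw [Subgroup.index_ker, hker] at e1
      have : Fact (Nat.Prime 2) := ⟨Nat.prime_two⟩
      obtain ⟨⟨g, c, hc⟩, hg⟩ := exists_prime_orderOf_dvd_card' (G := f.range) 2 (by omega)
      have hg' : orderOf g = 2 := by rw [← hg]; exact (Subgroup.orderOf_mk _ _).symm
      have hg2 : g ^ 2 = 1 := by rw [← hg']; exact pow_orderOf_eq_one g
      rcases h2 g hg2 with rfl | rfl
      · simp at hg'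
      · exact ⟨c, hc⟩
    · rintro ⟨c, hc⟩
      have : orderOf c = 2 ^ (1 + 1) := by
        have : Fact (Nat.Prime 2) := ⟨Nat.prime_two⟩
        apply orderOf_eq_prime_pow
        · simpa [hc] using hP
        · rw [pow_add, pow_mul]; simp [hc, hP2]
      have h := orderOf_dvd_natCard c
      rw [this] at h
      simpa using h
  · intro hn a
    by_cases ha : ∃ c, c ^ 2 = a
    · exact Or.inl ha
    · right
      have := (Subgroup.mul_mem_iff_of_index_two hidx (a := a) (b := P)).mpr
        ⟨fun h => absurd h ha, fun h => absurd h hn⟩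
      exact this

lemma aux_prime (q p : ℕ) (hq : q.Prime) (hp : p.Prime) (hne : p ≠ q) (hq2 : q % 4 = 3)
    (hp2 : p % 4 = 1) : ∃ l : ℕ, l.Prime ∧ l % 4 = 1 ∧ l ≠ p ∧ l ≠ q ∧
      ¬ IsSquare (l : ZMod q) ∧ ¬ IsSquare (l : ZMod p) := by
  have := Fact.mk hq
  have := Fact.mk hp
  obtain ⟨u, hu⟩ := FiniteField.exists_nonsquare (F := ZMod q) (by rw [ZMod.ringChar_zmod_n]; omega)
  obtain ⟨v, hv⟩ := FiniteField.exists_nonsquare (F := ZMod p) (by rw [ZMod.ringChar_zmod_n]; omega)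
  have hcop : Nat.Coprime q p := (Nat.coprime_primes hq hp).mpr hne.symm
  have hcop4 : Nat.Coprime 4 (q * p) := by
    have : Nat.Coprime 2 (q * p) := by
      rw [Nat.coprime_two_left, Nat.odd_mul]
      exact ⟨Nat.odd_iff.mpr (by omega), Nat.odd_iff.mpr (by omega)⟩
    exact Nat.Coprime.pow_left 2 this
  obtain ⟨w, hw1, hw2⟩ := Nat.chineseRemainder hcop u.val v.val
  obtain ⟨t, ht1, ht2⟩ := Nat.chineseRemainder hcop4 1 w
  have htq : (t : ZMod q) = u := by
    rw [← ZMod.natCast_zmod_val u, ZMod.natCast_eq_natCast_iff]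
    exact (ht2.of_mul_right p).trans hw1
  have htp : (t : ZMod p) = v := by
    rw [← ZMod.natCast_zmod_val v, ZMod.natCast_eq_natCast_iff]
    exact (ht2.of_mul_left q).trans hw2
  have c1 : t.Coprime q := by
    rw [Nat.coprime_comm, hq.coprime_iff_not_dvd, ← ZMod.natCast_eq_zero_iff, htq]
    rintro rfl; simp at hu
  have c2 : t.Coprime p := by
    rw [Nat.coprime_comm, hp.coprime_iff_not_dvd, ← ZMod.natCast_eq_zero_iff, htp]
    rintro rfl; simp at hv
  have c3 : t.Coprime 4 := by
    have := ht1.gcd_eq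
    simpa [Nat.Coprime] using this
  obtain ⟨l, hl, hlp, hlm⟩ := Nat.forall_exists_prime_gt_and_modEq (p + q) (q := 4 * (q * p)) (a := t)
    (by have := hq.pos; have := hp.pos; positivity) (c3.mul_right (c1.mul_right c2))
  refine ⟨l, hlp, ?_, by omega, by omega, ?_, ?_⟩
  · exact (hlm.of_mul_right _).trans ht1
  · have : (l : ZMod q) = u := by
      rw [← htq, ZMod.natCast_eq_natCast_iff]
      exact (hlm.of_mul_left 4).of_mul_right p
    rwa [this]
  · have : (l : ZMod p) = v := by
      rw [← htp, ZMod.natCast_eq_natCast_iff]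
      exact (hlm.of_mul_left 4).of_mul_left q
    rwa [this]

section
variable {K : Type*} [Field K] [NumberField K]

lemma aux_form (hdim : finrank ℚ K = 2) (d : ℕ) (hd : Squarefree d) (hd0 : 0 < d)
    (s : 𝓞 K) (hs : s ^ 2 = -(d : 𝓞 K)) (x : 𝓞 K) :
    ∃ a b n : ℤ, 2 * x = a + b * s ∧ 4 * n = a ^ 2 + d * b ^ 2 ∧ Algebra.norm ℤ x = n ∧
      x ^ 2 - a * x + n = 0 := by
  have hsK : (s : K) ^ 2 = -(d : K) := by
    have := congrArg (algebraMap (𝓞 K) K) hs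
    simpa using this
  have hli : LinearIndependent ℚ ![(1 : K), (s : K)] := by
    rw [LinearIndependent.pair_iff]
    intro u v huv
    have hv : v = 0 := by
      by_contra hv
      have h1 : (s : K) = ((-u / v : ℚ) : K) := by
        have hv' : (v : K) ≠ 0 := by exact_mod_cast hv
        push_cast
        field_simp
        rw [Algebra.smul_def, Algebra.smul_def] at huv
        simp only [eq_ratCast, mul_one] at huv
        linear_combination huv
      rw [h1] at hsK
      have h2 : (-u / v : ℚ) ^ 2 = -(d : ℚ) := by exact_mod_cast hsK
      have : (0 : ℚ) < d := by exact_mod_cast hd0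
      nlinarith [sq_nonneg (-u / v : ℚ)]
    subst hv
    simpa using huv
  let B := basisOfLinearIndependentOfCardEqFinrank hli (by simp [hdim])
  have hB0 : B 0 = 1 := by simp [B]
  have hB1 : B 1 = (s : K) := by simp [B]
  obtain ⟨r, t, hrt⟩ : ∃ r t : ℚ, (x : K) = r + t * s := by
    refine ⟨B.repr x 0, B.repr x 1, ?_⟩
    have := B.sum_repr (x : K)
    rw [Fin.sum_univ_two, hB0, hB1, Algebra.smul_def, Algebra.smul_def] at this
    simpa using this.symm
  have hrep : ∀ u v : ℚ, ∀ i, B.repr ((u : K) + v * s) i = ![u, v] i := by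
    intro u v i
    have : (u : K) + v * s = u • B 0 + v • B 1 := by
      rw [hB0, hB1, Algebra.smul_def, Algebra.smul_def]; simp
    rw [this]
    fin_cases i <;> simp [Finsupp.single_apply]
  have hM : Algebra.leftMulMatrix B (x : K) = !![r, -d * t; t, r] := by
    ext i j
    rw [Algebra.leftMulMatrix_eq_repr_mul]
    fin_cases j
    · simp only [Fin.zero_eta, hB0, mul_one, hrt, hrep]
      fin_cases i <;> simp
    · have : (x : K) * s = ((-d * t : ℚ) : K) + (r : ℚ) * s := by
        rw [hrt]; push_cast; linear_combination (t : K) * hsK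
      simp only [Fin.mk_one, hB1, this, hrep]
      fin_cases i <;> simp
  have hnorm : (Algebra.norm ℤ x : ℚ) = r ^ 2 + d * t ^ 2 := by
    rw [Algebra.coe_norm_int, Algebra.norm_eq_matrix_det B, hM, Matrix.det_fin_two_of]; ring
  have htr : (Algebra.trace ℤ _ x : ℚ) = 2 * r := by
    rw [Algebra.coe_trace_int, Algebra.trace_eq_matrix_trace B, hM, Matrix.trace_fin_two_of]; ring
  obtain ⟨b, hb⟩ := aux_rat d hd (2 * t) (4 * Algebra.norm ℤ x - (Algebra.trace ℤ _ x) ^ 2) (by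
    push_cast; rw [hnorm, htr]; ring)
  set a := Algebra.trace ℤ _ x
  set n := Algebra.norm ℤ x
  have e1 : 2 * x = a + b * s := by
    apply RingOfIntegers.ext
    simp only [map_mul, map_add, map_ofNat, map_intCast]
    have ha' : (a : K) = 2 * r := by exact_mod_cast congrArg (Rat.cast : ℚ → K) htr
    have hb' : 2 * (t : K) = b := by exact_mod_cast congrArg (Rat.cast : ℚ → K) hb
    have hrt' : algebraMap (𝓞 K) K x = r + t * algebraMap (𝓞 K) K s := hrt
    rw [hrt', ha', ← hb']; ring
  have e2 : 4 * n = a ^ 2 + d * b ^ 2 := by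
    have : (4 * n : ℚ) = a ^ 2 + d * b ^ 2 := by rw [hnorm, htr, ← hb]; ring
    exact_mod_cast this
  refine ⟨a, b, n, e1, e2, rfl, ?_⟩
  have e2' : (4 * n : 𝓞 K) = a ^ 2 + d * b ^ 2 := by exact_mod_cast congrArg (Int.cast : ℤ → 𝓞 K) e2
  have : (4 : 𝓞 K) * (x ^ 2 - a * x + n) = 0 := by
    linear_combination (2 * x - a + b * s) * e1 + e2' + b ^ 2 * hs
  exact (mul_eq_zero.mp this).resolve_left (by norm_num)



lemma aux_red (hdim : finrank ℚ K = 2) (d : ℕ) (hd : Squarefree d) (hd0 : 0 < d)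
    (s : 𝓞 K) (hs : s ^ 2 = -(d : 𝓞 K)) (w : 𝓞 K) (hw : 2 * w = 1 + s) (hdodd : d % 2 = 1)
    (l : ℕ) (hl : l.Prime) (hld : ¬ l ∣ d) (x y : 𝓞 K) (h : x ^ 2 = l * y) :
    ∃ z, x = l * z := by
  obtain ⟨a, b, n, e1, e2, e3, e4⟩ := aux_form hdim d hd hd0 s hs x
  have hl' : Prime (l : ℤ) := Nat.prime_iff_prime_int.mp hl
  have hn : (l : ℤ) ∣ n := by
    have := congrArg (Algebra.norm ℤ) h
    rw [map_pow, map_mul, Algebra.norm_natCast, RingOfIntegers.rank, hdim, e3] at this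
    exact (Int.pow_dvd_pow_iff two_ne_zero).mp ⟨_, this⟩
  obtain ⟨n', rfl⟩ := hn
  push_cast at e4
  by_cases ha : (l : ℤ) ∣ a
  · have hb : (l : ℤ) ∣ b := by
      have : (l : ℤ) ∣ d * b ^ 2 := by
        have e : (d : ℤ) * b ^ 2 = l * (4 * n') - a ^ 2 := by linarith
        rw [e]
        exact dvd_sub (dvd_mul_right _ _) (dvd_pow ha two_ne_zero)
      rcases hl'.dvd_or_dvd this with h | h
      · exact absurd (by exact_mod_cast h) hld
      · exact hl'.dvd_of_dvd_pow h
    obtain ⟨a', rfl⟩ := ha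
    obtain ⟨b', rfl⟩ := hb
    push_cast at e1
    rcases hl.eq_two_or_odd' with rfl | ⟨m, hm⟩
    · have e5 : x = a' + b' * s := by
        have : (2 : 𝓞 K) ≠ 0 := two_ne_zero
        apply mul_left_cancel₀ this
        push_cast at e1
        linear_combination e1
      have e6 : 2 * n' = a' ^ 2 + d * b' ^ 2 := by push_cast at e2; linarith
      have e7 : Even (a' - b') := by
        have h1 : Even (a' ^ 2 + d * b' ^ 2) := ⟨n', by linarith⟩
        have h2 : ¬ Even (d : ℤ) := by
          rw [Int.not_even_iff_odd]; exact_mod_cast Nat.odd_iff.mpr hdodd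
        simp only [Int.even_add, Int.even_mul, Int.even_pow, Int.even_sub, h2] at h1 ⊢
        simpa using h1
      obtain ⟨k, hk⟩ := e7
      refine ⟨k + b' * w, ?_⟩
      have hk' : (a' - b' : 𝓞 K) = k + k := by exact_mod_cast congrArg (Int.cast : ℤ → 𝓞 K) hk
      push_cast
      linear_combination e5 + hk' - b' * hw
    · refine ⟨x - m * (a' + b' * s), ?_⟩
      have hm' : (l : 𝓞 K) = 2 * m + 1 := by exact_mod_cast congrArg (Nat.cast : ℕ → 𝓞 K) hm
      linear_combination -x * hm' - m * e1
  · have hc : IsCoprime a (l : ℤ) := ((Prime.coprime_iff_not_dvd hl').mpr ha).symm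
    obtain ⟨u, v, huv⟩ := hc
    have huv' : (u * a + v * l : 𝓞 K) = 1 := by exact_mod_cast congrArg (Int.cast : ℤ → 𝓞 K) huv
    refine ⟨u * (y + n') + v * x, ?_⟩
    linear_combination -x * huv' - u * e4 + u * h

lemma aux_one_iff (I : (Ideal (𝓞 K))⁰) :
    ClassGroup.mk0 I = 1 ↔ ∃ x, (I : Ideal (𝓞 K)) = Ideal.span {x} := by
  obtain ⟨I, hI⟩ := I
  rw [ClassGroup.mk0_eq_one_iff, Submodule.isPrincipal_iff]

lemma aux_Psq (r r' : ℕ) (hc : Nat.Coprime r r') (s : 𝓞 K) (hs : s ^ 2 = -((r * r' : ℕ) : 𝓞 K)) :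
    (Ideal.span {(r : 𝓞 K), s}) ^ 2 = Ideal.span {(r : 𝓞 K)} := by
  obtain ⟨u, v, huv⟩ := (Nat.isCoprime_iff_coprime.mpr hc)
  have huv' : (u * r + v * r' : 𝓞 K) = 1 := by exact_mod_cast congrArg (Int.cast : ℤ → 𝓞 K) huv
  push_cast at hs
  rw [pow_two, Ideal.span_pair_mul_span_pair]
  apply le_antisymm
  · rw [Ideal.span_le]
    intro z hz
    simp only [Set.mem_insert_iff, Set.mem_singleton_iff] at hz
    simp only [SetLike.mem_coe, Ideal.mem_span_singleton]
    rcases hz with rfl | rfl | rfl | rfl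
    · exact dvd_mul_right _ _
    · exact dvd_mul_right _ _
    · exact dvd_mul_left _ _
    · exact ⟨-r', by linear_combination hs⟩
  · rw [Ideal.span_singleton_le_iff_mem]
    have : u * (r * r) + (-v) * (s * s) = (r : 𝓞 K) := by
      linear_combination r * huv' - v * hs
    refine (congrArg (· ∈ _) this).mp ?_
    apply Ideal.add_mem
    · exact Ideal.mul_mem_left _ _ (Ideal.subset_span (by simp))
    · exact Ideal.mul_mem_left _ _ (Ideal.subset_span (by simp))

lemma aux_PQ (r r' : ℕ) (hc : Nat.Coprime r r') (s : 𝓞 K) (hs : s ^ 2 = -((r * r' : ℕ) : 𝓞 K)) :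
    (Ideal.span {(r : 𝓞 K), s}) * (Ideal.span {(r' : 𝓞 K), s}) = Ideal.span {s} := by
  obtain ⟨u, v, huv⟩ := (Nat.isCoprime_iff_coprime.mpr hc)
  have huv' : (u * r + v * r' : 𝓞 K) = 1 := by exact_mod_cast congrArg (Int.cast : ℤ → 𝓞 K) huv
  push_cast at hs
  rw [Ideal.span_pair_mul_span_pair]
  apply le_antisymm
  · rw [Ideal.span_le]
    intro z hz
    simp only [Set.mem_insert_iff, Set.mem_singleton_iff] at hz
    simp only [SetLike.mem_coe, Ideal.mem_span_singleton]
    rcases hz with rfl | rfl | rfl | rfl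
    · exact ⟨-s, by linear_combination hs⟩
    · exact dvd_mul_left _ _
    · exact dvd_mul_right _ _
    · exact dvd_mul_right _ _
  · rw [Ideal.span_singleton_le_iff_mem]
    have : u * (r * s) + v * (s * r') = s := by
      linear_combination s * huv'
    refine (congrArg (· ∈ _) this).mp ?_
    apply Ideal.add_mem
    · exact Ideal.mul_mem_left _ _ (Ideal.subset_span (by simp))
    · exact Ideal.mul_mem_left _ _ (Ideal.subset_span (by simp))

lemma aux_norm (hdim : finrank ℚ K = 2) (L : Ideal (𝓞 K)) (t : ℕ)
    (h : L ^ 2 = Ideal.span {(t : 𝓞 K)}) : Ideal.absNorm L = t := by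
  have := congrArg Ideal.absNorm h
  rw [map_pow, Ideal.absNorm_span_natCast, RingOfIntegers.rank, hdim] at this
  exact Nat.pow_left_injective two_ne_zero this

lemma aux_ind (hdim : finrank ℚ K = 2) (C : ClassGroup (𝓞 K)) (hC : C ^ 2 = 1)
    (hstep : ∀ l : ℕ, l.Prime → ∃ (L : (Ideal (𝓞 K))⁰) (t : ℕ), 1 < t ∧
      (L : Ideal (𝓞 K)) ^ 2 = Ideal.span {(t : 𝓞 K)} ∧
      (ClassGroup.mk0 L = 1 ∨ ClassGroup.mk0 L = C) ∧
      ∀ x y : 𝓞 K, x ^ 2 = l * y → x ∈ (L : Ideal (𝓞 K))) :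
    ∀ (m : ℕ) (B : (Ideal (𝓞 K))⁰), m ≠ 0 → (B : Ideal (𝓞 K)) ^ 2 = Ideal.span {(m : 𝓞 K)} →
      ClassGroup.mk0 B = 1 ∨ ClassGroup.mk0 B = C := by
  intro m
  induction m using Nat.strong_induction_on with
  | _ m ih =>
  intro B hm hB
  by_cases h1 : m = 1
  · left
    subst h1
    have := aux_norm hdim _ _ hB
    rw [Ideal.absNorm_eq_one_iff] at this
    rw [aux_one_iff]
    exact ⟨1, by rw [this]; simp⟩
  · obtain ⟨l, hl, k, rfl⟩ := Nat.exists_prime_and_dvd h1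
    obtain ⟨L, t, ht, hL, hLC, hmem⟩ := hstep l hl
    have hle : (B : Ideal (𝓞 K)) ≤ L := by
      intro x hx
      have : x ^ 2 ∈ (B : Ideal (𝓞 K)) ^ 2 := Ideal.pow_mem_pow hx 2
      rw [hB, Ideal.mem_span_singleton] at this
      obtain ⟨y, hy⟩ := this
      exact hmem x (k * y) (by rw [hy]; push_cast; ring)
    obtain ⟨B', hB'⟩ := Ideal.dvd_iff_le.mpr hle
    have hB0 : B' ∈ (Ideal (𝓞 K))⁰ := by
      apply mem_nonZeroDivisors_of_ne_zero
      rintro rfl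
      rw [mul_zero] at hB'
      exact nonZeroDivisors.coe_ne_zero B hB'
    have hN : l * k = t * Ideal.absNorm B' := by
      rw [← aux_norm hdim _ _ hB, ← aux_norm hdim _ _ hL, hB', map_mul]
    have hn0 : Ideal.absNorm B' ≠ 0 := by
      intro h; rw [h, mul_zero] at hN; exact hm hN
    have := ih (Ideal.absNorm B') (by rw [hN]; have := Nat.pos_of_ne_zero hn0; nlinarith)
      ⟨B', hB0⟩ hn0 (by
        have h2 := hB
        rw [hN, hB', mul_pow, hL] at h2
        push_cast at h2
        rw [← Ideal.span_singleton_mul_span_singleton] at h2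
        refine mul_left_cancel₀ ?_ h2
        rw [← hL]
        exact pow_ne_zero 2 (nonZeroDivisors.coe_ne_zero L))
    have hBL : B = L * ⟨B', hB0⟩ := Subtype.ext hB'
    rw [hBL, map_mul]
    rw [pow_two] at hC
    rcases hLC with h | h <;> rcases this with h' | h' <;> rw [h, h'] <;> simp [hC]

lemma aux_cl2 (hdim : finrank ℚ K = 2) (d : ℕ) (hd : Squarefree d) (hd0 : 0 < d)
    (s : 𝓞 K) (hs : s ^ 2 = -(d : 𝓞 K)) (C : ClassGroup (𝓞 K)) (hC : C ^ 2 = 1)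
    (hind : ∀ (m : ℕ) (B : (Ideal (𝓞 K))⁰), m ≠ 0 →
      (B : Ideal (𝓞 K)) ^ 2 = Ideal.span {(m : 𝓞 K)} →
      ClassGroup.mk0 B = 1 ∨ ClassGroup.mk0 B = C) (c : ClassGroup (𝓞 K)) (hc : c ^ 2 = 1) :
    c = 1 ∨ c = C := by
  obtain ⟨A, rfl⟩ := ClassGroup.mk0_surjective c
  rw [← map_pow, aux_one_iff] at hc
  set n := Ideal.absNorm (A : Ideal (𝓞 K)) with hn
  have hn0 : n ≠ 0 := Ideal.absNorm_ne_zero_of_nonZeroDivisors A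
  obtain ⟨x, hx, hxn⟩ : ∃ x : 𝓞 K, (A : Ideal (𝓞 K)) ^ 2 = Ideal.span {x} ∧ x + n ≠ 0 := by
    obtain ⟨x, hx⟩ := hc
    rw [SubmonoidClass.coe_pow] at hx
    by_cases h : x + n = 0
    · refine ⟨-x, by rw [hx, Ideal.span_singleton_neg], ?_⟩
      have : -x + n = ((2 * n : ℕ) : 𝓞 K) := by push_cast; linear_combination -h
      rw [this]
      exact_mod_cast (by omega : 2 * n ≠ 0)
    · exact ⟨x, hx, h⟩
  obtain ⟨a, b, N, e1, e2, e3, e4⟩ := aux_form hdim d hd hd0 s hs x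
  have hN : N = (n : ℤ) ^ 2 := by
    have h1 := congrArg Ideal.absNorm hx
    rw [map_pow, Ideal.absNorm_span_singleton, e3] at h1
    have h2 : 0 ≤ N := by nlinarith [sq_nonneg a, sq_nonneg b]
    rw [← Int.natAbs_of_nonneg h2, ← h1]
    push_cast; rfl
  subst hN
  have hm0 : 0 ≤ a + 2 * n := by
    have : a ^ 2 ≤ (2 * (n : ℤ)) ^ 2 := by nlinarith [sq_nonneg b]
    have := abs_le_of_sq_le_sq' this (by positivity)
    linarith [this.1]
  obtain ⟨m, hm⟩ := Int.eq_ofNat_of_zero_le hm0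
  have hm' : (a + 2 * n : 𝓞 K) = m := by exact_mod_cast congrArg (Int.cast : ℤ → 𝓞 K) hm
  have key : (x + n) ^ 2 = m * x := by
    push_cast at e4
    linear_combination e4 + x * hm'
  have hmne : m ≠ 0 := by
    rintro rfl
    rw [Nat.cast_zero, zero_mul] at key
    exact hxn (pow_eq_zero_iff two_ne_zero |>.mp key)
  have key' : Ideal.span {x + (n : 𝓞 K)} ^ 2 = Ideal.span {(m : 𝓞 K)} * (A : Ideal (𝓞 K)) ^ 2 := by
    rw [hx, Ideal.span_singleton_pow, key, Ideal.span_singleton_mul_span_singleton]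
  have hdvd : (A : Ideal (𝓞 K)) ∣ Ideal.span {x + (n : 𝓞 K)} :=
    (UniqueFactorizationMonoid.pow_dvd_pow_iff_dvd two_ne_zero).mp (key' ▸ dvd_mul_left _ _)
  obtain ⟨B, hB⟩ := hdvd
  have hB0 : B ∈ (Ideal (𝓞 K))⁰ := by
    apply mem_nonZeroDivisors_of_ne_zero
    rintro rfl
    rw [mul_zero, Ideal.zero_eq_bot, Ideal.span_singleton_eq_bot] at hB
    exact hxn hB
  have hBm : B ^ 2 = Ideal.span {(m : 𝓞 K)} := by
    rw [hB, mul_pow, mul_comm] at key'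
    exact mul_right_cancel₀ (pow_ne_zero 2 (nonZeroDivisors.coe_ne_zero A)) key'
  have hone : ClassGroup.mk0 A * ClassGroup.mk0 ⟨B, hB0⟩ = 1 := by
    rw [← map_mul, aux_one_iff]
    exact ⟨_, hB.symm⟩
  rw [pow_two] at hC
  rcases hind m ⟨B, hB0⟩ hmne hBm with h | h
  · left; simpa [h] using hone
  · right
    rw [h] at hone
    exact mul_right_cancel (hone.trans hC.symm)

lemma aux_split (hdim : finrank ℚ K = 2) (d : ℕ) (hd : Squarefree d) (hd0 : 0 < d)
    (s : 𝓞 K) (hs : s ^ 2 = -(d : 𝓞 K)) (l : ℕ) (hl : l.Prime) (hl2 : l ≠ 2) (r k : ℤ)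
    (hr : r ^ 2 + d = l * k) : ∃ L : (Ideal (𝓞 K))⁰, Ideal.absNorm (L : Ideal (𝓞 K)) = l := by
  have hN : Ideal.absNorm (Ideal.span {(l : 𝓞 K)}) = l ^ 2 := by
    rw [Ideal.absNorm_span_natCast, RingOfIntegers.rank, hdim]
  have hne : Ideal.span {(l : 𝓞 K)} ≠ ⊤ := by
    intro h
    rw [h, Ideal.absNorm_top] at hN
    have := hl.one_lt
    nlinarith
  obtain ⟨M, hM, hle⟩ := Ideal.exists_le_maximal _ hne
  obtain ⟨J, hJ⟩ := Ideal.dvd_iff_le.mpr hle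
  have hM1 : Ideal.absNorm M ≠ 1 := by
    rw [Ne, Ideal.absNorm_eq_one_iff]; exact hM.ne_top
  have hdv : Ideal.absNorm M ∣ l ^ 2 := by rw [← hN, hJ, map_mul]; exact dvd_mul_right _ _
  have hMl : Ideal.absNorm M = l := by
    obtain ⟨i, hi, hi'⟩ := (Nat.dvd_prime_pow hl).mp hdv
    interval_cases i
    · simp at hi'; exact absurd hi' (by simpa using hM1)
    · simpa using hi'
    · exfalso
      have hJ1 : Ideal.absNorm J = 1 := by
        have h := hN
        rw [hJ, map_mul, hi'] at h
        exact Nat.eq_of_mul_eq_mul_left (pow_pos hl.pos 2) (by rw [h, mul_one])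
      rw [Ideal.absNorm_eq_one_iff] at hJ1
      rw [hJ1, Ideal.mul_top] at hJ
      have key : ∀ r : ℤ, ¬ (l : 𝓞 K) ∣ s - r := by
        rintro r ⟨z, hz⟩
        obtain ⟨a, b, n, e1, -⟩ := aux_form hdim d hd hd0 s hs z
        have h1 : ((2 - l * b : ℤ) : 𝓞 K) * s = ((l * a + 2 * r : ℤ) : 𝓞 K) := by
          push_cast
          linear_combination 2 * hz + l * e1
        have h2 : (2 - l * b) ^ 2 * (-(d : ℤ)) = (l * a + 2 * r) ^ 2 := by
          have : (((2 - l * b : ℤ) : 𝓞 K) * s) ^ 2 = (((l * a + 2 * r : ℤ) : 𝓞 K)) ^ 2 := by rw [h1]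
          rw [mul_pow, hs] at this
          have h2' : (((2 - l * b) ^ 2 * (-(d : ℤ)) : ℤ) : 𝓞 K) = (((l * a + 2 * r) ^ 2 : ℤ) : 𝓞 K) := by
            push_cast at this ⊢
            exact this
          exact Int.cast_injective h2'
        have h3 : (2 - l * b : ℤ) = 0 := by
          have hd' : (0 : ℤ) < d := by exact_mod_cast hd0
          by_contra h
          have : 0 < (2 - l * b : ℤ) ^ 2 := by positivity
          nlinarith [sq_nonneg (l * a + 2 * r)]
        have h4 : (l : ℤ) ∣ 2 := ⟨b, by linarith⟩
        have h5 : l ∣ 2 := by exact_mod_cast h4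
        exact hl2 ((Nat.prime_dvd_prime_iff_eq hl Nat.prime_two).mp h5)
      have hmem : (s - r) * (s - ((-r : ℤ) : 𝓞 K)) ∈ M := by
        rw [← hJ, Ideal.mem_span_singleton]
        have hr' : (r ^ 2 + d : 𝓞 K) = l * k := by exact_mod_cast congrArg (Int.cast : ℤ → 𝓞 K) hr
        refine ⟨-k, ?_⟩
        push_cast
        linear_combination hs - hr'
      rcases hM.isPrime.mem_or_mem hmem with h | h
      · rw [← hJ, Ideal.mem_span_singleton] at h
        exact key _ h
      · rw [← hJ, Ideal.mem_span_singleton] at h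
        exact key _ h
  refine ⟨⟨M, ?_⟩, hMl⟩
  rw [← Ideal.absNorm_ne_zero_iff_mem_nonZeroDivisors, hMl]
  exact hl.ne_zero

lemma aux_rep (hdim : finrank ℚ K = 2) (d : ℕ) (hd : Squarefree d) (hd0 : 0 < d)
    (s : 𝓞 K) (hs : s ^ 2 = -(d : 𝓞 K)) (I : (Ideal (𝓞 K))⁰) (c : ClassGroup (𝓞 K))
    (h : c ^ 2 = ClassGroup.mk0 I) : ∃ n a b : ℤ, n ≠ 0 ∧
      4 * (Ideal.absNorm (I : Ideal (𝓞 K)) : ℤ) * n ^ 2 = a ^ 2 + d * b ^ 2 := by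
  obtain ⟨A, hA⟩ := ClassGroup.mk0_surjective c⁻¹
  have h1 : ClassGroup.mk0 (I * A ^ 2) = 1 := by
    rw [map_mul, map_pow, hA, ← h]; simp
  obtain ⟨x, hx⟩ := (aux_one_iff _).mp h1
  obtain ⟨a, b, N, e1, e2, e3, e4⟩ := aux_form hdim d hd hd0 s hs x
  refine ⟨Ideal.absNorm (A : Ideal (𝓞 K)), a, b, ?_, ?_⟩
  · exact_mod_cast Ideal.absNorm_ne_zero_of_nonZeroDivisors A
  · have h1 := congrArg Ideal.absNorm hx
    rw [Submonoid.coe_mul, SubmonoidClass.coe_pow, map_mul, map_pow,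
      Ideal.absNorm_span_singleton, e3] at h1
    have h2 : 0 ≤ N := by nlinarith [sq_nonneg a, sq_nonneg b]
    rw [← e2, ← Int.natAbs_of_nonneg h2, ← h1]
    push_cast; ring

lemma aux_omega (d : ℕ) (hd : d % 4 = 3) (s : 𝓞 K) (hs : s ^ 2 = -(d : 𝓞 K)) :
    ∃ w : 𝓞 K, 2 * w = 1 + s := by
  have hsK : (s : K) ^ 2 = -(d : K) := by
    have := congrArg (algebraMap (𝓞 K) K) hs
    simpa using this
  obtain ⟨k, hk⟩ : ∃ k : ℕ, d + 1 = 4 * k := ⟨(d + 1) / 4, by omega⟩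
  have hk' : (d + 1 : K) = 4 * k := by exact_mod_cast congrArg (Nat.cast : ℕ → K) hk
  have hi : IsIntegral ℤ ((1 + (s : K)) / 2) := by
    refine ⟨Polynomial.X ^ 2 - Polynomial.X + Polynomial.C (k : ℤ), by monicity!, ?_⟩
    simp only [Polynomial.eval₂_add, Polynomial.eval₂_sub, Polynomial.eval₂_pow,
      Polynomial.eval₂_X, Polynomial.eval₂_C]
    simp only [map_natCast]
    linear_combination hsK / 4 - hk' / 4
  obtain ⟨w, hw⟩ : ∃ w : 𝓞 K, algebraMap (𝓞 K) K w = (1 + algebraMap (𝓞 K) K s) / 2 :=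
    ⟨⟨_, hi⟩, rfl⟩
  refine ⟨w, ?_⟩
  apply RingOfIntegers.ext
  change algebraMap (𝓞 K) K (2 * w) = algebraMap (𝓞 K) K (1 + s)
  rw [map_mul, map_add, map_ofNat, map_one, hw]
  ring

end

/-- Let q ≡ 3 (mod 4) and p ≡ 1 (mod 4) be primes. Then 4 divides the class
number of Q(√(-qp)) if and only if the Legendre symbol (-q/p) equals 1. -/
theorem four_dvd_classNumber_iff (q p : ℕ) (hq : q.Prime) [Fact p.Prime]
    (hne : p ≠ q) (hq4 : q % 4 = 3) (hp4 : p % 4 = 1)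
    (K : Type*) [Field K] [NumberField K]
    (hdim : finrank ℚ K = 2) (hgen : ∃ α : K, α ^ 2 = -(q * p : ℚ)) :
    4 ∣ NumberField.classNumber K ↔ legendreSym p (-(q : ℤ)) = 1 := by
  have hp : p.Prime := Fact.out
  have : Fact q.Prime := ⟨hq⟩
  have hcop : Nat.Coprime q p := (Nat.coprime_primes hq hp).mpr hne.symm
  have hp5 : 5 ≤ p := by have := hp.two_le; omega
  have hq3 : 3 ≤ q := by omega
  obtain ⟨d, hdd⟩ : ∃ d, d = q * p := ⟨_, rfl⟩
  have hd : Squarefree d := by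
    rw [hdd, Nat.squarefree_mul hcop]; exact ⟨hq.squarefree, hp.squarefree⟩
  have hd4 : d % 4 = 3 := by rw [hdd, Nat.mul_mod, hq4, hp4]
  have hd0 : 0 < d := by omega
  obtain ⟨s, hs⟩ : ∃ s : 𝓞 K, s ^ 2 = -(d : 𝓞 K) := by
    obtain ⟨α, hα⟩ := hgen
    have hα' : α ^ 2 = ((-(d : ℤ) : ℤ) : K) := by
      rw [hα, hdd]; push_cast; ring
    have hi : IsIntegral ℤ α := by
      apply IsIntegral.of_pow two_pos
      rw [hα']
      exact isIntegral_algebraMap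
    obtain ⟨s, h1⟩ : ∃ s : 𝓞 K, algebraMap (𝓞 K) K s = α := ⟨⟨α, hi⟩, rfl⟩
    refine ⟨s, ?_⟩
    apply RingOfIntegers.ext
    change algebraMap (𝓞 K) K (s ^ 2) = algebraMap (𝓞 K) K (-(d : 𝓞 K))
    rw [map_pow, h1, hα']
    simp
  obtain ⟨w, hw⟩ := aux_omega d hd4 s hs
  -- the two ramified primes
  have hsP : s ^ 2 = -((p * q : ℕ) : 𝓞 K) := by rw [hs, hdd, mul_comm]
  have hsQ : s ^ 2 = -((q * p : ℕ) : 𝓞 K) := by rw [hs, hdd]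
  have hP2 := aux_Psq p q hcop.symm s hsP
  have hQ2 := aux_Psq q p hcop s hsQ
  have hPQ := aux_PQ q p hcop s hsQ
  have hPN := aux_norm hdim _ _ hP2
  have hQN := aux_norm hdim _ _ hQ2
  obtain ⟨P, hPdef⟩ : ∃ P : (Ideal (𝓞 K))⁰, (P : Ideal (𝓞 K)) = Ideal.span {(p : 𝓞 K), s} :=
    ⟨⟨Ideal.span {(p : 𝓞 K), s}, by
      rw [← Ideal.absNorm_ne_zero_iff_mem_nonZeroDivisors, hPN]; exact hp.ne_zero⟩, rfl⟩
  obtain ⟨Q, hQdef⟩ : ∃ Q : (Ideal (𝓞 K))⁰, (Q : Ideal (𝓞 K)) = Ideal.span {(q : 𝓞 K), s} :=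
    ⟨⟨Ideal.span {(q : 𝓞 K), s}, by
      rw [← Ideal.absNorm_ne_zero_iff_mem_nonZeroDivisors, hQN]; exact hq.ne_zero⟩, rfl⟩
  rw [← hPdef] at hP2 hPN
  rw [← hQdef] at hQ2 hQN
  rw [← hPdef, ← hQdef] at hPQ
  have hPprime : (P : Ideal (𝓞 K)).IsPrime :=
    Ideal.isPrime_of_irreducible_absNorm (by rw [hPN]; exact hp)
  have hQprime : (Q : Ideal (𝓞 K)).IsPrime :=
    Ideal.isPrime_of_irreducible_absNorm (by rw [hQN]; exact hq)
  have hC : ClassGroup.mk0 P ^ 2 = 1 := by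
    rw [← map_pow, aux_one_iff]; exact ⟨_, hP2⟩
  have hQC : ClassGroup.mk0 Q = ClassGroup.mk0 P := by
    have h1 : ClassGroup.mk0 Q * ClassGroup.mk0 P = 1 := by
      rw [← map_mul, aux_one_iff]; exact ⟨_, hPQ⟩
    rw [pow_two] at hC
    exact mul_right_cancel (h1.trans hC.symm)
  have hmemr : ∀ (R : Ideal (𝓞 K)) (r : ℕ), R.IsPrime → R ^ 2 = Ideal.span {(r : 𝓞 K)} →
      ∀ x y : 𝓞 K, x ^ 2 = r * y → x ∈ R := by
    intro R r hR hR2 x y hxy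
    have : x ^ 2 ∈ R ^ 2 := by
      rw [hR2, Ideal.mem_span_singleton]; exact ⟨y, hxy⟩
    exact hR.mem_of_pow_mem 2 (Ideal.pow_le_self two_ne_zero this)
  have hstep : ∀ l : ℕ, l.Prime → ∃ (L : (Ideal (𝓞 K))⁰) (t : ℕ), 1 < t ∧
      (L : Ideal (𝓞 K)) ^ 2 = Ideal.span {(t : 𝓞 K)} ∧
      (ClassGroup.mk0 L = 1 ∨ ClassGroup.mk0 L = ClassGroup.mk0 P) ∧
      ∀ x y : 𝓞 K, x ^ 2 = l * y → x ∈ (L : Ideal (𝓞 K)) := by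
    intro l hl
    by_cases hlp : l = p
    · subst hlp
      exact ⟨P, l, hl.one_lt, hP2, Or.inr rfl, hmemr _ _ hPprime hP2⟩
    by_cases hlq : l = q
    · subst hlq
      exact ⟨Q, l, hl.one_lt, hQ2, Or.inr hQC, hmemr _ _ hQprime hQ2⟩
    have hld : ¬ l ∣ d := by
      rw [hdd, hl.dvd_mul, Nat.prime_dvd_prime_iff_eq hl hq, Nat.prime_dvd_prime_iff_eq hl hp]
      tauto
    have hl0 : (l : 𝓞 K) ≠ 0 := by exact_mod_cast hl.ne_zero
    refine ⟨⟨Ideal.span {(l : 𝓞 K)}, mem_nonZeroDivisors_of_ne_zero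
      (by rw [Ne, Ideal.zero_eq_bot, Ideal.span_singleton_eq_bot]; exact hl0)⟩, l ^ 2,
      Nat.one_lt_pow two_ne_zero hl.one_lt, ?_, Or.inl ?_, ?_⟩
    · push_cast
      exact Ideal.span_singleton_pow _ _
    · rw [aux_one_iff]; exact ⟨_, rfl⟩
    · intro x y hxy
      rw [Ideal.mem_span_singleton]
      exact aux_red hdim d hd hd0 s hs w hw (by omega) l hl hld x y hxy
  have hcl2 := aux_cl2 hdim d hd hd0 s hs _ hC (aux_ind hdim _ hC hstep)
  have hp' : Prime (p : ℤ) := Nat.prime_iff_prime_int.mp hp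
  have hdvda : ∀ N a b : ℤ, 4 * (N * p) = a ^ 2 + d * b ^ 2 →
      ∃ a', a = p * a' ∧ 4 * N = q * b ^ 2 + p * 1 * a' ^ 2 := by
    intro N a b h
    have : (p : ℤ) ∣ a := by
      apply hp'.dvd_of_dvd_pow (n := 2)
      refine ⟨4 * N - q * b ^ 2, ?_⟩
      rw [hdd] at h
      push_cast at h
      linarith
    obtain ⟨a', rfl⟩ := this
    refine ⟨a', rfl, ?_⟩
    apply mul_left_cancel₀ hp'.ne_zero
    rw [hdd] at h
    push_cast at h
    linarith
  have hPne : ClassGroup.mk0 P ≠ 1 := by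
    intro h
    obtain ⟨x, hx⟩ := (aux_one_iff _).mp h
    obtain ⟨a, b, N, e1, e2, e3, e4⟩ := aux_form hdim d hd hd0 s hs x
    have h1 := congrArg Ideal.absNorm hx
    rw [Ideal.absNorm_span_singleton, e3, hPN] at h1
    have h2 : 0 ≤ N := by nlinarith [sq_nonneg a, sq_nonneg b]
    have h3 : N = p := by rw [h1, Int.natAbs_of_nonneg h2]
    obtain ⟨a', -, h4⟩ := hdvda 1 a b (by rw [one_mul, ← h3, e2])
    have hp5' : (5 : ℤ) ≤ p := by exact_mod_cast hp5
    have hq3' : (3 : ℤ) ≤ q := by exact_mod_cast hq3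
    have ha' : a' = 0 := by
      by_contra h
      have : 1 ≤ a' ^ 2 := by have : 0 < a' ^ 2 := by positivity
                              omega
      nlinarith [sq_nonneg b]
    subst ha'
    have hb1 : b ^ 2 < 2 := by nlinarith
    have hb2 : 0 ≤ b ^ 2 := sq_nonneg b
    have : b ^ 2 = 0 ∨ b ^ 2 = 1 := by omega
    rcases this with h | h <;> rw [h] at h4 <;> omega
  have hgrp := aux_group (ClassGroup.mk0 P) hPne hC hcl2
  have hcard : NumberField.classNumber K = Nat.card (ClassGroup (𝓞 K)) := by
    rw [NumberField.classNumber, Nat.card_eq_fintype_card]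
  have hneg : legendreSym p (-(q : ℤ)) = legendreSym p q := by
    rw [legendreSym.at_neg (by omega), ZMod.χ₄_nat_one_mod_four hp4, one_mul]
  have hrec : legendreSym q p = legendreSym p q :=
    legendreSym.quadratic_reciprocity_one_mod_four hp4 (by omega)
  have hq' : Prime (q : ℤ) := Nat.prime_iff_prime_int.mp hq
  have hnd : ∀ a b : ℕ, a.Prime → b.Prime → a ≠ b → ¬ (a : ℤ) ∣ (b : ℤ) := by
    intro a b ha hb hab h
    exact hab ((Nat.prime_dvd_prime_iff_eq ha hb).mp (by exact_mod_cast h))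
  have hn4 : ∀ a : ℕ, a.Prime → a ≠ 2 → ¬ (a : ℤ) ∣ 4 := by
    intro a ha ha2 h
    have : a ∣ 2 ^ 2 := by exact_mod_cast h
    exact ha2 ((Nat.prime_dvd_prime_iff_eq ha Nat.prime_two).mp (ha.dvd_of_dvd_pow this))
  have hn1 : ∀ a : ℕ, a.Prime → ¬ (a : ℤ) ∣ 1 := by
    intro a ha h
    have : a ∣ 1 := by exact_mod_cast h
    exact ha.one_lt.ne' (Nat.dvd_one.mp this)
  have h4 : ∀ a : ℕ, [Fact a.Prime] → a ≠ 2 → legendreSym a 4 = 1 := by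
    intro a _ ha2
    have ha : a.Prime := Fact.out
    have := legendreSym.sq_one' a (a := 2) (by
      intro h
      have h' : a ∣ 2 := by
        rw [← ZMod.natCast_eq_zero_iff]; exact_mod_cast h
      exact ha2 ((Nat.prime_dvd_prime_iff_eq ha Nat.prime_two).mp h'))
    simpa using this
  rw [hcard, hgrp.1, hneg]
  constructor
  · rintro ⟨c, hc⟩
    obtain ⟨n, a, b, hn, h⟩ := aux_rep hdim d hd hd0 s hs P c hc
    rw [hPN] at h
    obtain ⟨a', -, h'⟩ := hdvda (n ^ 2) a b (by rw [← h]; ring)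
    have := aux_ternary (r := p) 4 q 1 (hn4 p hp (by omega)) (hnd p q hp hq hne) (hn1 p hp)
      _ n b a' rfl hn h'
    rwa [legendreSym.mul, h4 p (by omega), one_mul] at this
  · intro hleg
    by_contra hno
    obtain ⟨l, hl, hl4, hlp, hlq, hsq, hsp⟩ := aux_prime q p hq hp hne hq4 hp4
    have : Fact l.Prime := ⟨hl⟩
    have hl2 : l ≠ 2 := by rintro rfl; omega
    have hLq : legendreSym q l = -1 := (legendreSym.eq_neg_one_iff' q).mpr hsq
    have hLp : legendreSym p l = -1 := (legendreSym.eq_neg_one_iff' p).mpr hsp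
    have hld : ¬ l ∣ d := by
      rw [hdd, hl.dvd_mul, Nat.prime_dvd_prime_iff_eq hl hq, Nat.prime_dvd_prime_iff_eq hl hp]
      tauto
    have hLd : legendreSym l (-(d : ℤ)) = 1 := by
      rw [legendreSym.at_neg hl2, ZMod.χ₄_nat_one_mod_four hl4, one_mul, hdd]
      push_cast
      rw [legendreSym.mul,
        ← legendreSym.quadratic_reciprocity_one_mod_four (p := l) (q := q) hl4 (by omega),
        ← legendreSym.quadratic_reciprocity_one_mod_four (p := l) (q := p) hl4 (by omega),
        hLq, hLp]
      norm_num
    obtain ⟨r, k, hrk⟩ : ∃ r k : ℤ, r ^ 2 + d = l * k := by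
      have hd0' : ((-(d : ℤ) : ℤ) : ZMod l) ≠ 0 := by
        push_cast
        rw [neg_ne_zero, Ne, ZMod.natCast_eq_zero_iff]
        exact hld
      obtain ⟨y, hy⟩ := (legendreSym.eq_one_iff l hd0').mp hLd
      refine ⟨y.val, ?_⟩
      have : (l : ℤ) ∣ (y.val : ℤ) ^ 2 + d := by
        rw [← ZMod.intCast_zmod_eq_zero_iff_dvd]
        push_cast at hy ⊢
        rw [ZMod.natCast_zmod_val]
        linear_combination -hy
      exact this
    obtain ⟨L, hL⟩ := aux_split hdim d hd hd0 s hs l hl hl2 r k hrk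
    have h4l : ¬ (q : ℤ) ∣ 4 * l := by
      intro h
      rcases hq'.dvd_or_dvd h with h | h
      · exact hn4 q hq (by omega) h
      · exact hnd q l hq hl hlq.symm h
    rcases hgrp.2 hno (ClassGroup.mk0 L) with ⟨c, hc⟩ | ⟨c, hc⟩
    · obtain ⟨n, a, b, hn, h⟩ := aux_rep hdim d hd hd0 s hs L c hc
      rw [hL] at h
      have := aux_ternary (r := q) (4 * l) 1 p h4l (hn1 q hq) (hnd q p hq hp hne.symm)
        _ n a b rfl hn (by rw [h, hdd]; push_cast; ring)
      rw [mul_one, legendreSym.mul, h4 q (by omega), one_mul, hLq] at this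
      norm_num at this
    · rw [← map_mul] at hc
      obtain ⟨n, a, b, hn, h⟩ := aux_rep hdim d hd hd0 s hs (L * P) c hc
      rw [Submonoid.coe_mul, map_mul, hL, hPN] at h
      push_cast at h
      obtain ⟨a', -, h'⟩ := hdvda (l * n ^ 2) a b (by rw [← h]; ring)
      have := aux_ternary (r := q) (4 * l) p 1 h4l (hnd q p hq hp hne.symm) (hn1 q hq)
        _ n a' b rfl hn (by rw [mul_assoc, h']; ring)
      rw [legendreSym.mul, legendreSym.mul, h4 q (by omega), one_mul, hLq, hrec, hleg] at this
      norm_num at this
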